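/- arXiv:2006.05417 — 2 statements merged into one kernel-verified Lean document; each statement's English description precedes it below -/
import Mathlib

section
/- Fix an r-tuple T = (t_1,…,t_r) of positive integers. Then the family of real numbers 1/[K_{N,T} : K], indexed by all r-tuples N = (n_1,…,n_r) of positive integers, is summable; that is, the series ∑_N 1/[K_{N,T} : K] converges. -/
open scoped BigOperators

/-- A fixed primitive `n`-th root of unity in `ℂ` (for `n ≥ 1`). -/
noncomputable def primRoot (n : ℕ) : ℂ := Complex.exp (2 * Real.pi * Complex.I / n)

/-- The subfield `K(ζ_n, α_1^{1/t_1}, …, α_r^{1/t_r})` of `ℂ`, obtained by adjoining to `K`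
a primitive `n`-th root of unity and, for each `i`, all complex roots of `X^{t_i} - α_i`. -/
noncomputable def kummerField (K : IntermediateField ℚ ℂ) {r : ℕ} (α : Fin r → ℂ)
    (n : ℕ) (t : Fin r → ℕ) : IntermediateField ℚ ℂ :=
  K ⊔ IntermediateField.adjoin ℚ ({primRoot n} ∪ ⋃ i, {z : ℂ | z ^ (t i) = α i})

/-- The cyclotomic extension `K(ζ_n)` of `K` inside `ℂ`. -/
noncomputable def cycloField (K : IntermediateField ℚ ℂ) (n : ℕ) : IntermediateField ℚ ℂ :=
  K ⊔ IntermediateField.adjoin ℚ {primRoot n}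

lemma cyclo_le_kummer (K : IntermediateField ℚ ℂ) {r : ℕ} (α : Fin r → ℂ)
    (n : ℕ) (t : Fin r → ℕ) : cycloField K n ≤ kummerField K α n t :=
  sup_le_sup_left (IntermediateField.adjoin.mono _ _ _ Set.subset_union_left) _

lemma base_le_kummer (K : IntermediateField ℚ ℂ) {r : ℕ} (α : Fin r → ℂ)
    (n : ℕ) (t : Fin r → ℕ) : K ≤ kummerField K α n t :=
  le_sup_left


theorem totient_aux (n : ℕ) : n ≤ 2 * n.totient ^ 2 ∧ (Odd n → n ≤ n.totient ^ 2) := by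
  induction n using Nat.recOnPosPrimePosCoprime with
  | zero => simp
  | one => simp
  | prime_pow p k hp hk =>
    obtain ⟨j, rfl⟩ : ∃ j, k = j + 1 := ⟨k - 1, by omega⟩
    rw [Nat.totient_prime_pow hp hk, Nat.add_sub_cancel]
    obtain ⟨q, rfl⟩ : ∃ q, p = q + 1 := ⟨p - 1, by have := hp.pos; omega⟩
    have hq : 1 ≤ q := by have := hp.two_le; omega
    rw [Nat.add_sub_cancel]
    have h1 : 1 ≤ (q + 1) ^ j := Nat.one_le_pow _ _ (by omega)
    have h2 : (q + 1) ^ j ≤ ((q + 1) ^ j) ^ 2 := by nlinarith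
    refine ⟨?_, fun hodd => ?_⟩
    · calc (q + 1) ^ (j + 1) = (q + 1) ^ j * (q + 1) := pow_succ _ _
        _ ≤ ((q + 1) ^ j) ^ 2 * (2 * q ^ 2) := Nat.mul_le_mul h2 (by nlinarith)
        _ = _ := by ring
    · have hq2 : 2 ≤ q := by
        rcases Nat.lt_or_ge q 2 with h | h
        · have : q = 1 := by omega
          subst this
          exact absurd hodd (by simp [Nat.odd_pow_iff])
        · exact h
      calc (q + 1) ^ (j + 1) = (q + 1) ^ j * (q + 1) := pow_succ _ _
        _ ≤ ((q + 1) ^ j) ^ 2 * (q ^ 2) := Nat.mul_le_mul h2 (by nlinarith)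
        _ = _ := by ring
  | coprime a b ha hb hab iha ihb =>
    rw [Nat.totient_mul hab]
    refine ⟨?_, fun hodd => ?_⟩
    · rcases Nat.even_or_odd a with h | h
      · have hbo : Odd b := by
          by_contra hb'
          rw [Nat.not_odd_iff_even] at hb'
          exact Nat.not_coprime_of_dvd_of_dvd (by norm_num) h.two_dvd hb'.two_dvd hab
        calc a * b ≤ (2 * a.totient ^ 2) * b.totient ^ 2 := Nat.mul_le_mul iha.1 (ihb.2 hbo)
          _ = _ := by ring
      · calc a * b ≤ a.totient ^ 2 * (2 * b.totient ^ 2) := Nat.mul_le_mul (iha.2 h) ihb.1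
          _ = _ := by ring
    · rw [Nat.odd_mul] at hodd
      calc a * b ≤ a.totient ^ 2 * (b.totient ^ 2) := Nat.mul_le_mul (iha.2 hodd.1) (ihb.2 hodd.2)
          _ = _ := by ring

theorem summable_pi_prod {r : ℕ} (f : ℕ+ → ℝ) (hf0 : ∀ n, 0 ≤ f n) (hf : Summable f) :
    Summable (fun N : Fin r → ℕ+ => ∏ i, f (N i)) := by
  classical
  refine summable_of_sum_le (c := ∏ _i : Fin r, ∑' n, f n)
    (fun N => Finset.prod_nonneg fun i _ => hf0 _) fun s => ?_
  let S : Finset ℕ+ := s.biUnion fun N => Finset.univ.image N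
  calc ∑ N ∈ s, ∏ i, f (N i) ≤ ∑ N ∈ Fintype.piFinset (fun _ : Fin r => S), ∏ i, f (N i) := by
        refine Finset.sum_le_sum_of_subset_of_nonneg ?_
          (fun N _ _ => Finset.prod_nonneg fun i _ => hf0 _)
        intro N hN
        rw [Fintype.mem_piFinset]
        intro i
        exact Finset.mem_biUnion.2 ⟨N, hN, Finset.mem_image_of_mem _ (Finset.mem_univ _)⟩
    _ = ∏ _i : Fin r, ∑ n ∈ S, f n := (Finset.prod_univ_sum _ _).symm
    _ ≤ _ := Finset.prod_le_prod (fun i _ => Finset.sum_nonneg fun _ _ => hf0 _)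
        fun i _ => hf.sum_le_tsum _ fun _ _ => hf0 _

theorem linInd_of_chars {F E ι : Type*} [Field F] [Field E] [Algebra F E] [IsGalois F E]
    (x : ι → E) (hx0 : ∀ i, x i ≠ 0)
    (h : ∀ (σ : E ≃ₐ[F] E) i, ∃ c : F, σ (x i) = algebraMap F E c * x i)
    (hd : ∀ i j, (∃ c : F, x i = algebraMap F E c * x j) → i = j) :
    LinearIndependent F x := by
  let χ : ι → ((E ≃ₐ[F] E) →* E) := fun i =>
    { toFun := fun σ => σ (x i) / x i
      map_one' := by simp [hx0]
      map_mul' := fun σ τ => by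
        obtain ⟨c, hc⟩ := h τ i
        have := hx0 i
        simp only [AlgEquiv.mul_apply, hc, map_mul, AlgEquiv.commutes]
        field_simp }
  have hχ : Function.Injective χ := by
    intro i j hij
    apply hd
    have : x i / x j ∈ Set.range (algebraMap F E) := by
      rw [InfiniteGalois.mem_range_algebraMap_iff_fixed]
      intro σ
      have h1 : σ (x i) / x i = σ (x j) / x j := DFunLike.congr_fun hij σ
      have := hx0 i
      have := hx0 j
      have h3 : σ (x j) ≠ 0 := by simpa using hx0 j
      rw [map_div₀]
      field_simp at h1 ⊢
      linear_combination h1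
    obtain ⟨c, hc⟩ := this
    refine ⟨c, ?_⟩
    rw [hc, div_mul_cancel₀ _ (hx0 j)]
  have hli := (linearIndependent_monoidHom (E ≃ₐ[F] E) E).comp χ hχ
  rw [linearIndependent_iff'] at hli ⊢
  intro s g hg i hi
  have key := hli s (fun i => algebraMap F E (g i) * x i) (by
    funext σ
    have := congrArg σ hg
    simp only [map_sum, Algebra.smul_def, map_mul, AlgEquiv.commutes, map_zero] at this
    simp only [Finset.sum_apply, Pi.smul_apply, smul_eq_mul, Function.comp, Pi.zero_apply]
    rw [← this]
    refine Finset.sum_congr rfl fun j _ => ?_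
    have := hx0 j
    change algebraMap F E (g j) * x j * (σ (x j) / x j) = _
    field_simp) i hi
  simpa [hx0] using key

/-- Schinzel-type lemma. -/
theorem schinzel {K E : Type*} [Field K] [Field E] [Algebra K E] [IsGalois K E]
    (n : ℕ) (hn : 0 < n) (ζ : E) (hζ : IsPrimitiveRoot ζ n) (w : ℕ)
    (hw : ∀ (g : ℕ) (z : K), 0 < g → IsPrimitiveRoot z g → g ∣ w)
    (β : E) (hβ0 : β ≠ 0) (hβ : β ∈ IntermediateField.adjoin K {ζ})
    (hβn : ∃ a : K, β ^ n = algebraMap K E a) :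
    ∃ κ : K, (β ^ w) ^ n = algebraMap K E κ ^ n := by
  obtain ⟨a, ha⟩ := hβn
  have : NeZero n := ⟨hn.ne'⟩
  have hζ0 : ζ ≠ 0 := hζ.ne_zero hn.ne'
  have hact : ∀ σ : E ≃ₐ[K] E, ∃ k : ℕ, σ ζ = ζ ^ k := fun σ => by
    obtain ⟨i, -, hi⟩ := hζ.eq_pow_of_pow_eq_one (ξ := σ ζ) (by rw [← map_pow, hζ.pow_eq_one, map_one])
    exact ⟨i, hi.symm⟩
  choose k hk using hact
  have hcomm : ∀ (σ τ : E ≃ₐ[K] E), σ (τ β) = τ (σ β) := by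
    intro σ τ
    let M : IntermediateField K E :=
      { carrier := {x | σ (τ x) = τ (σ x)}
        mul_mem' := fun {a b} ha hb => by simp_all
        add_mem' := fun {a b} ha hb => by simp_all
        algebraMap_mem' := fun c => by simp
        inv_mem' := fun x hx => by simp_all }
    have : IntermediateField.adjoin K {ζ} ≤ M := by
      rw [IntermediateField.adjoin_simple_le_iff]
      change σ (τ ζ) = τ (σ ζ)
      rw [hk, hk, map_pow, map_pow, hk, hk, ← pow_mul, ← pow_mul, mul_comm]
    exact this hβ
  have hχ : ∀ σ : E ≃ₐ[K] E, ∃ j : ℕ, σ β = ζ ^ j * β := fun σ => by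
    obtain ⟨i, -, hi⟩ := hζ.eq_pow_of_pow_eq_one (ξ := σ β / β) (by
      rw [div_pow, ← map_pow, ha, AlgEquiv.commutes, ← ha, div_self (pow_ne_zero _ hβ0)])
    exact ⟨i, by rw [hi, div_mul_cancel₀ _ hβ0]⟩
  choose j hj using hχ
  -- the subgroup of exponents
  let I : AddSubgroup ℤ :=
    { carrier := {m | ∃ κ : K, κ ≠ 0 ∧ (β ^ m) ^ n = algebraMap K E κ ^ n}
      zero_mem' := ⟨1, one_ne_zero, by simp⟩
      add_mem' := by
        rintro x y ⟨κ, h0, h⟩ ⟨κ', h0', h'⟩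
        exact ⟨κ * κ', mul_ne_zero h0 h0', by rw [zpow_add₀ hβ0, mul_pow, h, h', map_mul, mul_pow]⟩
      neg_mem' := by
        rintro x ⟨κ, h0, h⟩
        exact ⟨κ⁻¹, inv_ne_zero h0, by rw [zpow_neg, inv_pow, h, map_inv₀, inv_pow]⟩ }
  have hnI : (n : ℤ) ∈ I := ⟨a, by
    rintro rfl
    rw [map_zero] at ha
    exact pow_ne_zero n hβ0 ha, by rw [zpow_natCast, ha]⟩
  have hkI : ∀ τ, (k τ : ℤ) - 1 ∈ I := by
    intro τ
    have hfix : τ β / β ^ k τ ∈ Set.range (algebraMap K E) := by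
      rw [InfiniteGalois.mem_range_algebraMap_iff_fixed]
      intro σ
      rw [map_div₀, hcomm, map_pow, hj σ, map_mul, map_pow, hk τ, mul_pow, ← pow_mul, ← pow_mul,
        mul_comm (k τ) (j σ), mul_div_mul_left _ _ (pow_ne_zero _ hζ0)]
    obtain ⟨c, hc⟩ := hfix
    have hτ0 : τ β ≠ 0 := by simpa using hβ0
    have hc0 : c ≠ 0 := by
      rintro rfl
      rw [map_zero] at hc
      exact div_ne_zero hτ0 (pow_ne_zero _ hβ0) hc.symm
    refine ⟨c⁻¹, inv_ne_zero hc0, ?_⟩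
    rw [map_inv₀, hc, hj τ, zpow_sub₀ hβ0, zpow_natCast, zpow_one, inv_div, div_pow, div_pow, mul_pow,
      ← pow_mul ζ, mul_comm (j τ), pow_mul ζ, hζ.pow_eq_one, one_pow, one_mul]
  obtain ⟨g, hg⟩ := Int.subgroup_cyclic I
  have hgI : ∀ m, m ∈ I ↔ (g.natAbs : ℤ) ∣ m := by
    intro m
    rw [hg, ← AddSubgroup.zmultiples_eq_closure, Int.mem_zmultiples_iff, Int.natAbs_dvd]
  set G := g.natAbs
  have hGn : G ∣ n := by exact_mod_cast (hgI n).1 hnI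
  obtain ⟨q, hq⟩ := hGn
  have hG0 : 0 < G := Nat.pos_of_ne_zero (by rintro h; rw [h] at hq; omega)
  have hprim : IsPrimitiveRoot (ζ ^ q) G := hζ.pow hn (by rw [hq, mul_comm])
  have hfix : ζ ^ q ∈ Set.range (algebraMap K E) := by
    rw [InfiniteGalois.mem_range_algebraMap_iff_fixed]
    intro τ
    have h1 := (hgI _).1 (hkI τ)
    obtain ⟨c, hc⟩ := h1
    have : (k τ : ℤ) = 1 + G * c := by linarith
    rw [map_pow, hk τ, ← pow_mul, mul_comm, pow_mul, ← zpow_natCast, this, zpow_add₀ (pow_ne_zero _ hζ0),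
      zpow_mul, zpow_natCast (ζ ^ q) G, hprim.pow_eq_one]
    simp
  obtain ⟨z, hz⟩ := hfix
  rw [← hz] at hprim
  have hGw := hw G z hG0 (hprim.of_map_of_injective (algebraMap K E).injective)
  obtain ⟨κ, -, h⟩ := (hgI w).2 (by exact_mod_cast hGw)
  exact ⟨κ, by rw [← h, zpow_natCast]⟩


theorem sat_exponent {K : Type*} [Field K] [NumberField K] {r : ℕ} (α : Fin r → K)
    (hα0 : ∀ i, α i ≠ 0) (hind : ∀ e : Fin r → ℤ, ∏ i, α i ^ e i = 1 → e = 0) :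
    ∃ D : ℕ, 0 < D ∧ ∀ (n : ℕ) (a : Fin r → ℤ) (γ : K), 0 < n →
      γ ^ n = ∏ i, α i ^ a i → ∀ i, (n : ℤ) ∣ D * a i := by
  classical
  let S : Set K := {γ | ∃ n : ℕ, 0 < n ∧ ∃ a : Fin r → ℕ, (∀ i, a i ≤ n) ∧ γ ^ n = ∏ i, α i ^ a i}
  obtain ⟨M, hM0, hM⟩ : ∃ y ≠ (0 : ℤ), ∀ z ∈ Finset.univ.image α, IsIntegral ℤ (y • z) := by
    have : Algebra.IsAlgebraic ℤ K := by
      have : Algebra.IsAlgebraic ℚ K := inferInstance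
      exact (IsFractionRing.comap_isAlgebraic_iff (A := ℤ) (K := ℚ) (C := K)).2 this
    exact Algebra.IsAlgebraic.exists_integral_multiples ℤ _
  have hMi : ∀ i, IsIntegral ℤ ((M : K) * α i) := fun i => by
    have := hM (α i) (Finset.mem_image_of_mem _ (Finset.mem_univ _))
    rwa [zsmul_eq_mul] at this
  let B : ℝ := 1 + ∑ φ : K →+* ℂ, ∑ i, ‖φ (α i)‖
  have hB1 : 1 ≤ B := le_add_of_nonneg_right
    (Finset.sum_nonneg fun _ _ => Finset.sum_nonneg fun _ _ => norm_nonneg _)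
  have hB : ∀ (φ : K →+* ℂ) i, ‖φ (α i)‖ ≤ B := by
    intro φ i
    have h1 : ‖φ (α i)‖ ≤ ∑ i, ‖φ (α i)‖ :=
      Finset.single_le_sum (f := fun i => ‖φ (α i)‖) (fun _ _ => norm_nonneg _) (Finset.mem_univ i)
    have h2 : ∑ i, ‖φ (α i)‖ ≤ ∑ φ : K →+* ℂ, ∑ i, ‖φ (α i)‖ :=
      Finset.single_le_sum (f := fun φ : K →+* ℂ => ∑ i, ‖φ (α i)‖)
        (fun _ _ => Finset.sum_nonneg fun _ _ => norm_nonneg _) (Finset.mem_univ φ)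
    change _ ≤ 1 + _
    linarith
  have hS : S.Finite := by
    have hfin := NumberField.Embeddings.finite_of_norm_le K ℂ (‖(M : ℂ)‖ ^ r * B ^ r)
    refine Set.Finite.of_finite_image (f := fun γ => (M : K) ^ r * γ) (hfin.subset ?_) ?_
    · rintro _ ⟨γ, ⟨n, hn, a, han, h⟩, rfl⟩
      refine ⟨?_, fun φ => ?_⟩
      · refine IsIntegral.of_pow hn ?_
        have : ((M : K) ^ r * γ) ^ n = ∏ i, (((M : K) * α i) ^ a i * (M : K) ^ (n - a i)) := by
          have h2 : ∀ i, ((M : K) * α i) ^ a i * (M : K) ^ (n - a i) = (M : K) ^ n * α i ^ a i := by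
            intro i
            rw [mul_pow, ← Nat.add_sub_cancel' (han i), pow_add, Nat.add_sub_cancel' (han i)]
            ring
          simp_rw [h2]
          rw [Finset.prod_mul_distrib, mul_pow, h]
          simp [← pow_mul, mul_comm]
        rw [this]
        refine IsIntegral.prod _ fun i _ => ((hMi i).pow _).mul (IsIntegral.pow ?_ _)
        exact_mod_cast isIntegral_algebraMap (R := ℤ) (A := K) (x := M)
      · simp only [map_mul, map_pow, map_intCast, norm_mul, norm_pow]
        refine mul_le_mul_of_nonneg_left ?_ (by positivity)
        refine le_of_pow_le_pow_left₀ hn.ne' (by positivity) ?_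
        rw [← norm_pow, ← map_pow, h, map_prod, norm_prod]
        calc ∏ i, ‖φ (α i ^ a i)‖ ≤ ∏ _i : Fin r, B ^ n := by
              refine Finset.prod_le_prod (fun _ _ => norm_nonneg _) fun i _ => ?_
              rw [map_pow, norm_pow]
              exact (pow_le_pow_left₀ (norm_nonneg _) (hB φ i) _).trans
                (pow_le_pow_right₀ hB1 (han i))
          _ = _ := by simp [← pow_mul, mul_comm]
    · intro x _ y _ hxy
      exact mul_left_cancel₀ (pow_ne_zero _ (by exact_mod_cast hM0)) hxy
  have hd : ∀ γ : K, ∃ d : ℕ, 0 < d ∧ (γ ∈ S → ∃ b : Fin r → ℤ, γ ^ d = ∏ i, α i ^ b i) := by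
    intro γ
    by_cases hγ : γ ∈ S
    · obtain ⟨n, hn, a, -, h⟩ := hγ
      exact ⟨n, hn, fun _ => ⟨fun i => a i, by simpa using h⟩⟩
    · exact ⟨1, one_pos, fun h => absurd h hγ⟩
  choose d hd0 hd using hd
  refine ⟨∏ γ ∈ hS.toFinset, d γ, Finset.prod_pos fun γ _ => hd0 γ, ?_⟩
  set D := ∏ γ ∈ hS.toFinset, d γ
  intro n a γ hn h i
  have hnz : (0 : ℤ) < n := by exact_mod_cast hn
  let γ' : K := γ * ∏ i, α i ^ (-(a i / n))
  have hγ' : γ' ^ n = ∏ i, α i ^ (a i % n) := by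
    simp only [γ', mul_pow, h, ← Finset.prod_pow, ← Finset.prod_mul_distrib]
    refine Finset.prod_congr rfl fun i _ => ?_
    rw [← zpow_natCast, ← zpow_mul, ← zpow_add₀ (hα0 i)]
    congr 1
    have := Int.emod_add_mul_ediv (a i) n
    linarith
  have hγS : γ' ∈ S := by
    refine ⟨n, hn, fun i => (a i % n).toNat, fun i => ?_, ?_⟩
    · have := Int.emod_lt_of_pos (a i) hnz
      change (a i % n).toNat ≤ n
      omega
    · rw [hγ']
      refine Finset.prod_congr rfl fun i _ => ?_
      rw [← zpow_natCast, Int.toNat_of_nonneg (Int.emod_nonneg _ hnz.ne')]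
  obtain ⟨b, hb⟩ := hd γ' hγS
  obtain ⟨c, hc⟩ : d γ' ∣ D := Finset.dvd_prod_of_mem _ (hS.mem_toFinset.2 hγS)
  have e1 : (γ' ^ n) ^ D = ∏ i, α i ^ (a i % n * D) := by
    rw [hγ', ← Finset.prod_pow]
    refine Finset.prod_congr rfl fun i _ => ?_
    rw [← zpow_natCast, ← zpow_mul]
  have e2 : (γ' ^ n) ^ D = ∏ i, α i ^ (b i * (c * n)) := by
    rw [← pow_mul, mul_comm, hc, mul_assoc, pow_mul, hb, ← Finset.prod_pow]
    refine Finset.prod_congr rfl fun i _ => ?_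
    rw [← zpow_natCast, ← zpow_mul]
    push_cast
    rfl
  have hpne : ∏ i, α i ^ (b i * (c * n)) ≠ 0 :=
    Finset.prod_ne_zero_iff.2 fun i _ => zpow_ne_zero _ (hα0 i)
  have e3 := congrFun (hind (fun i => a i % n * D - b i * (c * n)) (by
    simp_rw [fun i => zpow_sub₀ (hα0 i)]
    rw [Finset.prod_div_distrib, ← e1, e2, div_self hpne])) i
  simp only [Pi.zero_apply] at e3
  refine ⟨b i * c + D * (a i / n), ?_⟩
  have := Int.emod_add_mul_ediv (a i) n
  linear_combination e3 - (D : ℤ) * this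

theorem totient_le_finrank_adjoin {K E : Type*} [Field K] [NumberField K] [Field E] [Algebra K E]
    (n : ℕ) (hn : 0 < n) (ζ : E) (hζ : IsPrimitiveRoot ζ n) :
    n.totient ≤ Module.finrank ℚ K * Module.finrank K (IntermediateField.adjoin K {ζ}) := by
  have : CharZero E := charZero_of_injective_algebraMap (algebraMap K E).injective
  have hζint : IsIntegral K ζ := hζ.isIntegral hn |>.tower_top
  have : FiniteDimensional K (IntermediateField.adjoin K {ζ}) :=
    IntermediateField.adjoin.finiteDimensional hζint
  have : FiniteDimensional ℚ (IntermediateField.adjoin K {ζ}) := FiniteDimensional.trans ℚ K _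
  rw [Module.finrank_mul_finrank ℚ K]
  let z : IntermediateField.adjoin K {ζ} := IntermediateField.AdjoinSimple.gen K ζ
  have hz : IsPrimitiveRoot z n := by
    refine IsPrimitiveRoot.of_map_of_injective
      (f := algebraMap (IntermediateField.adjoin K {ζ}) E) ?_
      (algebraMap (IntermediateField.adjoin K {ζ}) E).injective
    rw [IntermediateField.AdjoinSimple.algebraMap_gen]
    exact hζ
  have := minpoly.natDegree_le (A := ℚ) z
  rwa [← Polynomial.cyclotomic_eq_minpoly_rat hz hn, Polynomial.natDegree_cyclotomic] at this

theorem degree_bound {K E Ω : Type*} [Field K] [NumberField K] [Field E] [Algebra K E]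
    [IsGalois K E] [Field Ω] [Algebra K Ω] (f : E →ₐ[K] Ω) {r : ℕ} (α : Fin r → K)
    (hα0 : ∀ i, α i ≠ 0) (hind : ∀ e : Fin r → ℤ, ∏ i, α i ^ e i = 1 → e = 0) :
    ∃ C : ℕ, 0 < C ∧ ∀ (n : ℕ) (ζ : E) (m : Fin r → ℕ) (ρ : Fin r → E)
      (L : IntermediateField K Ω), 0 < n → IsPrimitiveRoot ζ n → (∀ i, 0 < m i) →
      (∀ i, m i ∣ n) → (∀ i, ρ i ^ m i = algebraMap K E (α i)) → FiniteDimensional K L →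
      f ζ ∈ L → (∀ i, f (ρ i) ∈ L) → n.totient * ∏ i, m i ≤ C * Module.finrank K L := by
  obtain ⟨D, hD0, hD⟩ := sat_exponent α hα0 hind
  let w := NumberField.Units.torsionOrder K
  have hw0 : 0 < w := NumberField.Units.torsionOrder_pos K
  let P := D * w
  have hP0 : 0 < P := Nat.mul_pos hD0 hw0
  refine ⟨Module.finrank ℚ K * P ^ r, Nat.mul_pos Module.finrank_pos (pow_pos hP0 _), ?_⟩
  intro n ζ m ρ L hn hζ hm hmn hρ hL hζL hρL
  let F := IntermediateField.adjoin K {ζ}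
  let c : Fin r → ℕ := fun i => (m i - 1) / P + 1
  have hmc : ∀ i, m i ≤ P * c i := by
    intro i
    have := Nat.lt_mul_div_succ (m i - 1) hP0
    change m i ≤ P * ((m i - 1) / P + 1)
    omega
  have hρ0 : ∀ i, ρ i ≠ 0 := by
    intro i h
    have h1 := hρ i
    rw [h, zero_pow (hm i).ne'] at h1
    exact hα0 i ((map_eq_zero _).1 h1.symm)
  let x : ((i : Fin r) → Fin (c i)) → E := fun e => ∏ i, ρ i ^ (e i : ℕ)
  have hx0 : ∀ e, x e ≠ 0 := fun e => Finset.prod_ne_zero_iff.2 fun i _ => pow_ne_zero _ (hρ0 i)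
  have hζF : ζ ∈ F := IntermediateField.mem_adjoin_simple_self K ζ
  have hxli : LinearIndependent F x := by
    refine linInd_of_chars x hx0 ?_ ?_
    · intro σ e
      have hχ : ∀ i, ∃ j : ℕ, σ (ρ i) = ζ ^ j * ρ i := fun i => by
        have : NeZero n := ⟨hn.ne'⟩
        have h1 : (σ (ρ i) / ρ i) ^ m i = 1 := by
          rw [div_pow, ← map_pow, hρ, IsScalarTower.algebraMap_apply K F E, AlgEquiv.commutes,
            div_self]
          simpa using hα0 i
        obtain ⟨j, -, hj⟩ := hζ.eq_pow_of_pow_eq_one (ξ := σ (ρ i) / ρ i) (by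
          obtain ⟨q, hq⟩ := hmn i
          rw [hq, pow_mul, h1, one_pow])
        exact ⟨j, by rw [hj, div_mul_cancel₀ _ (hρ0 i)]⟩
      choose j hj using hχ
      refine ⟨∏ i, (⟨ζ, hζF⟩ ^ j i) ^ (e i : ℕ), ?_⟩
      simp only [x, map_prod, map_pow, hj, mul_pow, Finset.prod_mul_distrib]
      rfl
    · rintro e e' ⟨t, ht⟩
      have htF : x e / x e' ∈ F := by
        rw [ht, mul_div_cancel_right₀ _ (hx0 e')]
        exact t.2
      choose q hq using hmn
      have hbn : (x e / x e') ^ n =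
          algebraMap K E (∏ i, α i ^ ((q i : ℤ) * ((e i : ℕ) - (e' i : ℕ) : ℤ))) := by
        simp only [x, ← Finset.prod_div_distrib, ← Finset.prod_pow, map_prod, map_zpow₀]
        refine Finset.prod_congr rfl fun i _ => ?_
        rw [← hρ, zpow_mul, zpow_natCast, ← pow_mul, ← hq i, zpow_sub₀ (pow_ne_zero _ (hρ0 i)),
          zpow_natCast, zpow_natCast, div_pow, ← pow_mul, ← pow_mul, ← pow_mul, ← pow_mul,
          mul_comm n, mul_comm n]
      obtain ⟨κ, hκ⟩ := schinzel n hn ζ hζ w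
        (fun g z hg hz => by
          have : NeZero g := ⟨hg.ne'⟩
          exact NumberField.Units.dvd_torsionOrder_of_isPrimitiveRoot hz)
        (x e / x e') (div_ne_zero (hx0 e) (hx0 e')) htF ⟨_, hbn⟩
      have hκ' : κ ^ n = ∏ i, α i ^ (((q i : ℤ) * ((e i : ℕ) - (e' i : ℕ) : ℤ)) * w) := by
        apply (algebraMap K E).injective
        rw [map_pow, ← hκ, ← pow_mul, mul_comm, pow_mul, hbn, ← map_pow, ← Finset.prod_pow]
        congr 1
        refine Finset.prod_congr rfl fun i _ => ?_
        rw [← zpow_natCast, ← zpow_mul]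
      have hdiv := hD n _ κ hn hκ'
      funext i
      have h1 : (m i : ℤ) ∣ P * ((e i : ℕ) - (e' i : ℕ) : ℤ) := by
        obtain ⟨s, hs⟩ := hdiv i
        have hq0 : (q i : ℤ) ≠ 0 := by
          intro h
          have h2 := hq i
          rw [show q i = 0 by exact_mod_cast h] at h2
          omega
        refine ⟨s, mul_left_cancel₀ hq0 ?_⟩
        have h3 : (n : ℤ) = m i * q i := by exact_mod_cast hq i
        rw [h3] at hs
        have h4 : (P : ℤ) = D * w := by simp [P]
        rw [h4]
        linear_combination hs
      have hb : ∀ e : (i : Fin r) → Fin (c i), ((P : ℤ) * (e i : ℕ)) < m i := by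
        intro e
        have h1 : (e i : ℕ) ≤ (m i - 1) / P := Nat.lt_succ_iff.1 (e i).2
        have h2 : P * (e i : ℕ) ≤ m i - 1 :=
          (Nat.mul_le_mul_left P h1).trans (Nat.mul_div_le _ _)
        have h3 := hm i
        have h4 : P * (e i : ℕ) < m i := by omega
        exact_mod_cast h4
      have h2 := hb e
      have h3 := hb e'
      have h5 : (P : ℤ) * ((e i : ℕ) - (e' i : ℕ) : ℤ) = 0 := by
        apply Int.eq_zero_of_abs_lt_dvd h1
        have h6 : (0 : ℤ) ≤ P * (e i : ℕ) := by positivity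
        have h7 : (0 : ℤ) ≤ P * (e' i : ℕ) := by positivity
        rw [mul_sub, abs_lt]
        constructor <;> linarith
      have h8 : (P : ℤ) ≠ 0 := by exact_mod_cast hP0.ne'
      have h9 := (mul_eq_zero.1 h5).resolve_left h8
      apply Fin.ext
      omega
  have hζint : IsIntegral K ζ := hζ.isIntegral hn |>.tower_top
  have : FiniteDimensional K F := IntermediateField.adjoin.finiteDimensional hζint
  let b := Module.finBasis K F
  have hli := linearIndependent_smul b.linearIndependent hxli
  have hli2 := hli.map' f.toLinearMap (LinearMap.ker_eq_bot.2 f.toRingHom.injective)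
  have hFL : F ≤ L.comap f := by
    rw [IntermediateField.adjoin_simple_le_iff]
    exact hζL
  let y : (Fin (Module.finrank K F) × ((i : Fin r) → Fin (c i))) → L := fun p =>
    ⟨f (b p.1 • x p.2), by
      rw [Algebra.smul_def, map_mul]
      refine mul_mem (hFL (b p.1).2) ?_
      simp only [x, map_prod, map_pow]
      exact prod_mem fun i _ => pow_mem (hρL i) _⟩
  have hy : LinearIndependent K y := LinearIndependent.of_comp L.val.toLinearMap hli2
  have hcard := hy.fintype_card_le_finrank
  simp only [Fintype.card_prod, Fintype.card_fin, Fintype.card_pi] at hcard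
  have hφ := totient_le_finrank_adjoin (K := K) n hn ζ hζ
  calc n.totient * ∏ i, m i
      ≤ (Module.finrank ℚ K * Module.finrank K F) * ∏ i, (P * c i) :=
        Nat.mul_le_mul hφ (Finset.prod_le_prod' fun i _ => hmc i)
    _ = Module.finrank ℚ K * P ^ r * (Module.finrank K F * ∏ i, c i) := by
        rw [Finset.prod_mul_distrib]
        simp
        ring
    _ ≤ _ := Nat.mul_le_mul_left _ hcard

/-- Let `K ⊆ ℂ` be a number field and `α_1,…,α_r ∈ K^×` multiplicatively
independent. Fix an `r`-tuple `T` of positive integers. Then the family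
`1/[K_{N,T} : K]`, indexed by all `r`-tuples `N` of positive integers, is summable. -/
theorem summable_inv_degree_KNT {r : ℕ} (K : IntermediateField ℚ ℂ)
    [FiniteDimensional ℚ K] (α : Fin r → ℂ)
    (hmem : ∀ i, α i ∈ K) (hα0 : ∀ i, α i ≠ 0)
    (hind : ∀ e : Fin r → ℤ, ∏ i, α i ^ e i = 1 → e = 0)
    (T : Fin r → ℕ+) :
    Summable (fun N : Fin r → ℕ+ =>
      (1 : ℝ) / (Module.finrank K (IntermediateField.extendScalars
        (base_le_kummer K α (Finset.univ.lcm fun i => (N i : ℕ) * (T i : ℕ))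
          (fun i => (N i : ℕ) * (T i : ℕ)))) : ℝ)) := by
  classical
  have : CharZero K := charZero_of_injective_algebraMap (algebraMap ℚ K).injective
  have : NumberField K := { to_charZero := inferInstance, to_finiteDimensional := inferInstance }
  let β : Fin r → K := fun i => ⟨α i, hmem i⟩
  have hβ0 : ∀ i, β i ≠ 0 := fun i h => hα0 i (congrArg Subtype.val h)
  have hβind : ∀ e : Fin r → ℤ, ∏ i, β i ^ e i = 1 → e = 0 := by
    intro e he
    apply hind
    have := congrArg (algebraMap K ℂ) he
    rw [map_prod, map_one] at this
    rw [← this]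
    refine Finset.prod_congr rfl fun i _ => ?_
    rw [map_zpow₀]
    rfl
  obtain ⟨C, hC0, hC⟩ := degree_bound (algebraicClosure K ℂ).val β hβ0 hβind
  let q : ℝ := 1 / (2 * (r + 1))
  have hq0 : 0 < q := by positivity
  have hsum : Summable (fun N : Fin r → ℕ+ => (2 * C : ℝ) * ∏ i, ((N i : ℕ) : ℝ) ^ (-(1 + q))) := by
    refine Summable.mul_left _ (summable_pi_prod (fun n : ℕ+ => ((n : ℕ) : ℝ) ^ (-(1 + q)))
      (fun n => by positivity) ?_)
    have h1 : Summable (fun n : ℕ => (n : ℝ) ^ (-(1 + q))) :=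
      Real.summable_nat_rpow.2 (by linarith)
    exact h1.comp_injective PNat.coe_injective
  refine Summable.of_nonneg_of_le (fun N => by positivity) (fun N => ?_) hsum
  set m : Fin r → ℕ := fun i => (N i : ℕ) * (T i : ℕ) with hm
  set n : ℕ := Finset.univ.lcm m with hn
  set L := IntermediateField.extendScalars (base_le_kummer K α n m) with hLdef
  have hm0 : ∀ i, 0 < m i := fun i => Nat.mul_pos (N i).pos (T i).pos
  have hmn : ∀ i, m i ∣ n := fun i => Finset.dvd_lcm (Finset.mem_univ i)
  have hn0 : 0 < n := by
    refine Nat.pos_of_ne_zero fun h => ?_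
    obtain ⟨i, -, hi⟩ := Finset.lcm_eq_zero_iff.1 h
    exact (hm0 i).ne' hi
  rcases Nat.eq_zero_or_pos (Module.finrank K L) with h0 | hpos
  · rw [h0]
    simp only [Nat.cast_zero, div_zero]
    positivity
  have hLfin : FiniteDimensional K L := Module.finite_of_finrank_pos hpos
  have hζ : IsPrimitiveRoot (primRoot n) n := Complex.isPrimitiveRoot_exp n hn0.ne'
  have hsub : ∀ z ∈ ({primRoot n} ∪ ⋃ i, {z : ℂ | z ^ (m i) = α i} : Set ℂ), z ∈ L := by
    intro z hz
    change z ∈ kummerField K α n m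
    exact (le_sup_right : _ ≤ kummerField K α n m) (IntermediateField.subset_adjoin _ _ hz)
  have hζL : primRoot n ∈ L := hsub _ (Or.inl rfl)
  choose ρ hρ using fun i => IsAlgClosed.exists_pow_nat_eq (α i) (hm0 i)
  have hρL : ∀ i, ρ i ∈ L := fun i => hsub _ (Or.inr (Set.mem_iUnion.2 ⟨i, hρ i⟩))
  have hLA : L ≤ algebraicClosure K ℂ := le_algebraicClosure K ℂ L
  have key := hC n ⟨primRoot n, hLA hζL⟩ m (fun i => ⟨ρ i, hLA (hρL i)⟩) L hn0
    (IsPrimitiveRoot.of_map_of_injective (f := (algebraicClosure K ℂ).val) hζ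
      (algebraicClosure K ℂ).val.injective)
    hm0 hmn (fun i => Subtype.ext (hρ i)) hLfin hζL hρL
  have hφ0 : 0 < n.totient := Nat.totient_pos.2 hn0
  have hNn : ∀ i, ((N i : ℕ) : ℝ) ≤ 2 * (n.totient : ℝ) ^ 2 := by
    intro i
    have h1 : (N i : ℕ) ≤ m i := Nat.le_mul_of_pos_right _ (T i).pos
    have h2 := (h1.trans (Nat.le_of_dvd hn0 (hmn i))).trans (totient_aux n).1
    exact_mod_cast h2
  have hφ1 : (1 : ℝ) ≤ n.totient := by exact_mod_cast hφ0
  set Φ : ℝ := (n.totient : ℝ)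
  have hX : (1 : ℝ) ≤ 2 * Φ ^ 2 := by nlinarith
  have hA : ∏ i, ((N i : ℕ) : ℝ) ^ q ≤ 2 * Φ := by
    calc ∏ i, ((N i : ℕ) : ℝ) ^ q ≤ ∏ _i : Fin r, (2 * Φ ^ 2) ^ q :=
          Finset.prod_le_prod (fun _ _ => by positivity) fun i _ =>
            Real.rpow_le_rpow (by positivity) (hNn i) hq0.le
      _ = (2 * Φ ^ 2) ^ (q * r) := by
          rw [Finset.prod_const, Finset.card_univ, Fintype.card_fin, Real.rpow_mul (by positivity),
            Real.rpow_natCast]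
      _ ≤ (2 * Φ ^ 2) ^ (1 / 2 : ℝ) := by
          refine Real.rpow_le_rpow_of_exponent_le hX ?_
          simp only [q]
          rw [div_mul_eq_mul_div, div_le_div_iff₀ (by positivity) (by positivity)]
          linarith
      _ ≤ 2 * Φ := by
          rw [← Real.sqrt_eq_rpow]
          refine Real.sqrt_le_iff.2 ⟨by positivity, by nlinarith⟩
  have hNpos : ∀ i, (0 : ℝ) < ((N i : ℕ) : ℝ) := fun i => by exact_mod_cast (N i).pos
  have hB : ∏ i, ((N i : ℕ) : ℝ) ^ (-(1 + q)) =
      1 / ((∏ i, ((N i : ℕ) : ℝ)) * ∏ i, ((N i : ℕ) : ℝ) ^ q) := by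
    rw [← Finset.prod_mul_distrib, one_div, ← Finset.prod_inv_distrib]
    refine Finset.prod_congr rfl fun i _ => ?_
    rw [Real.rpow_neg (hNpos i).le, Real.rpow_add (hNpos i), Real.rpow_one]
  have hPN : (∏ i, ((N i : ℕ) : ℝ)) ≤ ∏ i, (m i : ℝ) :=
    Finset.prod_le_prod (fun i _ => (hNpos i).le) fun i _ => by
      exact_mod_cast Nat.le_mul_of_pos_right _ (T i).pos
  have hP0 : 0 < ∏ i, ((N i : ℕ) : ℝ) := Finset.prod_pos fun i _ => hNpos i
  have hQ0 : 0 < ∏ i, ((N i : ℕ) : ℝ) ^ q :=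
    Finset.prod_pos fun i _ => Real.rpow_pos_of_pos (hNpos i) _
  have keyR : Φ * ∏ i, (m i : ℝ) ≤ C * (Module.finrank K L : ℝ) := by
    have : ((n.totient * ∏ i, m i : ℕ) : ℝ) ≤ ((C * Module.finrank K L : ℕ) : ℝ) := by
      exact_mod_cast key
    push_cast at this
    exact this
  have hposR : (0 : ℝ) < Module.finrank K L := by exact_mod_cast hpos
  rw [hB, mul_one_div, div_le_div_iff₀ hposR (by positivity), one_mul]
  calc (∏ i, ((N i : ℕ) : ℝ)) * ∏ i, ((N i : ℕ) : ℝ) ^ q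
      ≤ (∏ i, (m i : ℝ)) * (2 * Φ) := mul_le_mul hPN hA hQ0.le (hP0.le.trans hPN)
    _ = 2 * (Φ * ∏ i, (m i : ℝ)) := by ring
    _ ≤ 2 * (C * (Module.finrank K L : ℝ)) := by linarith
    _ = _ := by ring
end

section
/- Let γ_1,…,γ_r ∈ K^× be algebraic numbers, none of which is a root of unity, and for each i write γ_i = α_i/β_i with α_i, β_i nonzero elements of the ring of integers O_K. Let t_1,…,t_r be positive integers and let n be a common multiple of the t_i. Set F := K(ζ_n, γ_1^{1/t_1},…,γ_r^{1/t_r}) and t := t_1·t_2⋯t_r. Then log|d_F| ≤ φ(n)·t·( [K:ℚ]·log(n·t) + log|d_K| + 2·∑_{i=1}^r log|N_{K/ℚ}(α_iβ_i)| ), where d_F and d_K are the absolute discriminants of the number fields F and K, N_{K/ℚ} is the field norm from K to ℚ, and φ is Euler's totient function. -/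
open scoped BigOperators

section Aux
open NumberField Finset nonZeroDivisors

theorem kum_trace_identity {K F E ι : Type*} [Field K] [Field F] [Field E] [CharZero K]
    [Algebra K F] [Algebra K E] [FiniteDimensional K F] [IsAlgClosed E]
    [Fintype ι] [DecidableEq ι] (δ : ι → F) (s : ι → ℕ) (c : ι → K)
    (hδ0 : ∀ i, δ i ≠ 0) (hδ : ∀ i, δ i ^ s i = algebraMap K F (c i))
    (hext : ∀ σ τ : F →ₐ[K] E, (∀ i, σ (δ i) = τ (δ i)) → σ = τ) (τ : F →ₐ[K] E) (x : F) :
    (∏ i, (s i : F)) * x = ∑ j ∈ Fintype.piFinset (fun i => range (s i)),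
      algebraMap K F (Algebra.trace K F (x * ∏ i, (δ i)⁻¹ ^ j i)) * ∏ i, δ i ^ j i := by
  classical
  suffices hh : τ ((∏ i, (s i : F)) * x) = τ (∑ j ∈ Fintype.piFinset (fun i => range (s i)),
      algebraMap K F (Algebra.trace K F (x * ∏ i, (δ i)⁻¹ ^ j i)) * ∏ i, δ i ^ j i) from
    τ.toRingHom.injective hh
  have key : ∀ σ : F →ₐ[K] E, ∑ j ∈ Fintype.piFinset (fun i => range (s i)),
      (∏ i, (τ (δ i) * (σ (δ i))⁻¹) ^ j i) = if σ = τ then ∏ i, (s i : E) else 0 := by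
    intro σ
    rw [← Finset.prod_univ_sum (fun i => range (s i)) (fun i j => (τ (δ i) * (σ (δ i))⁻¹) ^ j)]
    split_ifs with h
    · subst h
      refine Finset.prod_congr rfl fun i _ => ?_
      rw [mul_inv_cancel₀ (by simpa using hδ0 i)]
      simp
    · have : ∃ i, σ (δ i) ≠ τ (δ i) := by
        by_contra! hh
        exact h (hext _ _ hh)
      obtain ⟨i, hi⟩ := this
      refine Finset.prod_eq_zero (Finset.mem_univ i) ?_
      have hσ : σ (δ i) ≠ 0 := by simpa using hδ0 i
      have h1 : (τ (δ i) * (σ (δ i))⁻¹) ^ s i = 1 := by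
        rw [mul_pow, inv_pow, ← map_pow, ← map_pow, hδ, AlgHom.commutes, AlgHom.commutes]
        apply mul_inv_cancel₀
        rw [← σ.commutes, ← hδ, map_pow]
        exact pow_ne_zero _ hσ
      have h2 : τ (δ i) * (σ (δ i))⁻¹ ≠ 1 := by
        intro h
        rw [mul_inv_eq_one₀ hσ] at h
        exact hi h.symm
      have h3 := geom_sum_mul (τ (δ i) * (σ (δ i))⁻¹) (s i)
      rw [h1, sub_self] at h3
      exact (mul_eq_zero.1 h3).resolve_right (sub_ne_zero.2 h2)
  have : ∀ j : ι → ℕ, τ (algebraMap K F (Algebra.trace K F (x * ∏ i, (δ i)⁻¹ ^ j i))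
      * ∏ i, δ i ^ j i) = ∑ σ : F →ₐ[K] E, σ x * ∏ i, (τ (δ i) * (σ (δ i))⁻¹) ^ j i := by
    intro j
    rw [map_mul, AlgHom.commutes, trace_eq_sum_embeddings E, Finset.sum_mul]
    refine Finset.sum_congr rfl fun σ _ => ?_
    simp only [map_mul, map_prod, map_pow, map_inv₀, mul_pow, Finset.prod_mul_distrib]
    ring
  rw [map_sum]
  rw [Finset.sum_congr rfl fun j _ => this j]
  rw [Finset.sum_comm]
  simp_rw [← Finset.mul_sum, key]
  simp [mul_comm]

theorem kum_isIntegral {K F : Type*} [Field K] [Field F] [Algebra K F]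
    {d : F} {s j : ℕ} (hs : 0 < s) (hj : j ≤ s) (a b : 𝓞 K)
    (hd : d ^ s * algebraMap K F b = algebraMap K F a) :
    IsIntegral ℤ (algebraMap K F b * d ^ j) := by
  apply IsIntegral.of_pow hs
  have : (algebraMap K F b * d ^ j) ^ s = algebraMap K F ((a ^ j * b ^ (s - j) : 𝓞 K) : K) := by
    obtain ⟨k, rfl⟩ := Nat.exists_eq_add_of_le hj
    simp only [map_mul, map_pow, ← hd, Nat.add_sub_cancel_left]
    ring
  rw [this]
  exact (RingOfIntegers.isIntegral_coe _).algebraMap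

theorem kum_mem_different {K F : Type*} (E : Type*) {ι : Type*} [Field K] [Field F] [Field E]
    [NumberField K] [NumberField F]
    [Algebra K F] [Algebra K E] [IsAlgClosed E]
    [Fintype ι] (δ : ι → F) (s : ι → ℕ) (hs : ∀ i, 0 < s i) (a b : ι → 𝓞 K)
    (ha : ∀ i, a i ≠ 0) (hb : ∀ i, b i ≠ 0)
    (hδ : ∀ i, δ i ^ s i * algebraMap K F (b i) = algebraMap K F (a i))
    (hext : ∀ σ τ : F →ₐ[K] E, (∀ i, σ (δ i) = τ (δ i)) → σ = τ) (τ : F →ₐ[K] E) :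
    algebraMap (𝓞 K) (𝓞 F) (∏ i, ((s i : 𝓞 K) * (a i * b i))) ∈ differentIdeal (𝓞 K) (𝓞 F) := by
  classical
  have hδ0 : ∀ i, δ i ≠ 0 := by
    intro i h
    have := hδ i
    rw [h, zero_pow (hs i).ne', zero_mul] at this
    exact ha i (by simpa using this.symm)
  have hb' : ∀ i, algebraMap K F (b i) ≠ 0 := fun i => by simpa using hb i
  have hδ' : ∀ i, δ i ^ s i = algebraMap K F ((a i : K) / b i) := fun i => by
    rw [map_div₀, eq_div_iff (hb' i), hδ]
  have hinv : ∀ i, (δ i)⁻¹ ^ s i * algebraMap K F (a i) = algebraMap K F (b i) := fun i => by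
    rw [← hδ, inv_pow, inv_mul_cancel_left₀ (pow_ne_zero _ (hδ0 i))]
  suffices h : algebraMap K F ((∏ i, ((s i : 𝓞 K) * (a i * b i)) : 𝓞 K) : K) ∈
      ((differentIdeal (𝓞 K) (𝓞 F) : Ideal (𝓞 F)) : FractionalIdeal (𝓞 F)⁰ F) by
    obtain ⟨y, hy, hy'⟩ := (FractionalIdeal.mem_coeIdeal _).1 h
    convert hy
    apply RingOfIntegers.ext
    exact hy'.symm
  rw [coeIdeal_differentIdeal (𝓞 K) K F, FractionalIdeal.mem_inv_iff
    (FractionalIdeal.dual_ne_zero _ _ (one_ne_zero (α := FractionalIdeal (𝓞 F)⁰ F)))]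
  intro x hx
  rw [FractionalIdeal.mem_dual (one_ne_zero (α := FractionalIdeal (𝓞 F)⁰ F))] at hx
  suffices hI : IsIntegral ℤ
      (algebraMap K F ((∏ i, ((s i : 𝓞 K) * (a i * b i)) : 𝓞 K) : K) * x) by
    rw [FractionalIdeal.mem_one_iff]
    exact ⟨⟨_, hI⟩, rfl⟩
  have h1 := kum_trace_identity δ s _ hδ0 hδ' hext τ x
  have h2 : algebraMap K F ((∏ i, ((s i : 𝓞 K) * (a i * b i)) : 𝓞 K) : K) * x =
      ∑ j ∈ Fintype.piFinset (fun i => range (s i)),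
      algebraMap K F (Algebra.trace K F (x * ∏ i, (algebraMap K F (a i) * (δ i)⁻¹ ^ j i))) *
        ∏ i, (algebraMap K F (b i) * δ i ^ j i) := by
    have h3 : algebraMap K F ((∏ i, ((s i : 𝓞 K) * (a i * b i)) : 𝓞 K) : K) * x =
      algebraMap K F (∏ i, (a i : K)) * algebraMap K F (∏ i, (b i : K)) *
        ((∏ i, (s i : F)) * x) := by
      simp only [map_prod, map_mul, Finset.prod_mul_distrib, map_natCast]
      ring
    rw [h3, h1, Finset.mul_sum]
    refine Finset.sum_congr rfl fun j _ => ?_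
    have h4 : x * ∏ i, (algebraMap K F (a i) * (δ i)⁻¹ ^ j i) =
        (∏ i, (a i : K)) • (x * ∏ i, (δ i)⁻¹ ^ j i) := by
      rw [Algebra.smul_def, Finset.prod_mul_distrib, map_prod]
      ring
    rw [h4, map_smul, smul_eq_mul, (algebraMap K F).map_mul, Finset.prod_mul_distrib, map_prod, map_prod]
    ring
  rw [h2]
  refine IsIntegral.sum _ fun j hj => ?_
  have hj' : ∀ i, j i ≤ s i := fun i =>
    (Finset.mem_range.1 ((Fintype.mem_piFinset.1 hj) i)).le
  refine IsIntegral.mul ?_ (IsIntegral.prod _ fun i _ => kum_isIntegral (hs i) (hj' i) _ _ (hδ i))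
  have hP : IsIntegral ℤ (∏ i, (algebraMap K F (a i) * (δ i)⁻¹ ^ j i)) :=
    IsIntegral.prod _ fun i _ => kum_isIntegral (hs i) (hj' i) _ _ (hinv i)
  obtain ⟨y, hy⟩ := hx (∏ i, (algebraMap K F (a i) * (δ i)⁻¹ ^ j i)) (by
    rw [FractionalIdeal.mem_one_iff]
    exact ⟨⟨_, hP⟩, rfl⟩)
  rw [Algebra.traceForm_apply] at hy
  rw [← hy]
  exact (RingOfIntegers.isIntegral_coe y).algebraMap

theorem kum_discr_le {K F : Type*} [Field K] [Field F]
    [NumberField K] [NumberField F] [Algebra K F] (C : 𝓞 K) (hC : C ≠ 0)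
    (h : algebraMap (𝓞 K) (𝓞 F) C ∈ differentIdeal (𝓞 K) (𝓞 F)) :
    Real.log |(discr F : ℝ)| ≤ (Module.finrank K F : ℝ) *
      (Real.log |((Algebra.norm ℚ (C : K) : ℚ) : ℝ)| + Real.log |(discr K : ℝ)|) := by
  have h1 := natAbs_discr_eq_absNorm_differentIdeal_mul_natAbs_discr_pow K (𝓞 K) F (𝓞 F)
  have hN : Algebra.norm ℤ C ≠ 0 := Algebra.norm_ne_zero_iff.2 hC
  have h2 : Ideal.absNorm (differentIdeal (𝓞 K) (𝓞 F)) ≤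
      (Algebra.norm ℤ C).natAbs ^ Module.finrank K F := by
    refine Nat.le_of_dvd (pow_pos (Int.natAbs_pos.2 hN) _) ?_
    have h3 : (Ideal.span {C}).map (algebraMap (𝓞 K) (𝓞 F)) ≤ differentIdeal (𝓞 K) (𝓞 F) := by
      rw [Ideal.map_span, Set.image_singleton, Ideal.span_singleton_le_iff_mem]
      exact h
    have h4 := Ideal.absNorm_dvd_absNorm_of_le h3
    rwa [Ideal.absNorm_algebraMap, Ideal.absNorm_span_singleton,
      ← IsFractionRing.finrank_eq (𝓞 K) K (𝓞 F) F] at h4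
  have h5 : (discr F).natAbs ≤
      ((Algebra.norm ℤ C).natAbs * (discr K).natAbs) ^ Module.finrank K F := by
    rw [h1, mul_pow]
    gcongr
  have hd : ((discr K).natAbs : ℝ) ≠ 0 := by simpa using discr_ne_zero K
  have hd' : (0 : ℝ) < (discr F).natAbs := by
    exact_mod_cast Int.natAbs_pos.2 (discr_ne_zero F)
  have hN' : ((Algebra.norm ℤ C).natAbs : ℝ) ≠ 0 := by simpa using hN
  have h6 := Real.log_le_log hd' (Nat.cast_le.2 h5)
  push_cast at h6
  rw [Real.log_pow, Real.log_mul (by simpa using hN) (by simpa using discr_ne_zero K)] at h6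
  rw [← Algebra.coe_norm_int]
  simpa using h6

end Aux

set_option maxHeartbeats 1000000 in
/-- Let `K ⊆ ℂ` be a number field, and let `γ_1,…,γ_r ∈ K^×` be nonzero
and not roots of unity, written `γ_i = a_i/b_i` with `a_i, b_i` nonzero algebraic integers
of `K`. Let `t_1,…,t_r` be positive integers and `n` a common multiple of the `t_i`.
With `F := K(ζ_n, γ_1^{1/t_1},…,γ_r^{1/t_r})` and `t := t_1⋯t_r`, we have
`log|d_F| ≤ φ(n)·t·([K:ℚ]·log(n·t) + log|d_K| + 2·∑ᵢ log|N_{K/ℚ}(a_ib_i)|)`. -/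
theorem log_discr_kummer_le {r : ℕ} (K : IntermediateField ℚ ℂ) [NumberField K]
    (γ a b : Fin r → K)
    (hγ0 : ∀ i, γ i ≠ 0)
    (hroot : ∀ i, ∀ k : ℕ, 0 < k → γ i ^ k ≠ 1)
    (ha : ∀ i, IsIntegral ℤ (a i)) (hb : ∀ i, IsIntegral ℤ (b i))
    (ha0 : ∀ i, a i ≠ 0) (hb0 : ∀ i, b i ≠ 0)
    (hγ : ∀ i, γ i = a i / b i)
    (n : ℕ) (t : Fin r → ℕ) (hn : 0 < n) (ht : ∀ i, 0 < t i) (htn : ∀ i, t i ∣ n)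
    [NumberField (kummerField K (fun i => ((γ i : ℂ))) n t)] :
    Real.log |(NumberField.discr (kummerField K (fun i => ((γ i : ℂ))) n t) : ℝ)| ≤
      (Nat.totient n : ℝ) * (∏ i, (t i : ℝ)) *
        ((Module.finrank ℚ K : ℝ) * Real.log ((n : ℝ) * ∏ i, (t i : ℝ)) +
          Real.log |(NumberField.discr K : ℝ)| +
          2 * ∑ i, Real.log |((Algebra.norm ℚ (a i * b i) : ℚ) : ℝ)|) := by
  classical
  have hζ : IsPrimitiveRoot (primRoot n) n := Complex.isPrimitiveRoot_exp n hn.ne'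
  have hsub : ∀ z, z ∈ ({primRoot n} ∪ ⋃ i, {z : ℂ | z ^ (t i) = (γ i : ℂ)} : Set ℂ) →
      z ∈ kummerField K (fun i => ((γ i : ℂ))) n t := fun z hz =>
    (le_sup_right : _ ≤ kummerField K (fun i => ((γ i : ℂ))) n t)
      (IntermediateField.subset_adjoin ℚ _ hz)
  have hζL := hsub (primRoot n) (Or.inl rfl)
  have hex : ∀ i, ∃ z : ℂ, z ^ t i = γ i := fun i => IsAlgClosed.exists_pow_nat_eq _ (ht i)
  choose d hd using hex
  have hdL : ∀ i, d i ∈ kummerField K (fun i => ((γ i : ℂ))) n t := fun i =>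
    hsub _ (Or.inr (Set.mem_iUnion.2 ⟨i, hd i⟩))
  have hKL := base_le_kummer K (fun i => ((γ i : ℂ))) n t
  have hLdef : kummerField K (fun i => ((γ i : ℂ))) n t = K ⊔ IntermediateField.adjoin ℚ
    ({primRoot n} ∪ ⋃ i, {z : ℂ | z ^ (t i) = (γ i : ℂ)}) := rfl
  generalize kummerField K (fun i => ((γ i : ℂ))) n t = L at *
  let _ : Algebra K L := (IntermediateField.inclusion hKL).toRingHom.toAlgebra
  have hmap : ∀ x : K, ((algebraMap K L x : L) : ℂ) = x := fun x => rfl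
  let τ : L →ₐ[K] ℂ := { L.val.toRingHom with commutes' := fun x => rfl }
  let z : L := ⟨primRoot n, hζL⟩
  let e : Fin r → L := fun i => ⟨d i, hdL i⟩
  have hz : IsPrimitiveRoot z n :=
    IsPrimitiveRoot.of_map_of_injective (f := L.val) hζ L.val.injective
  have he : ∀ i, e i ^ t i = algebraMap K L (γ i) := fun i => Subtype.ext (hd i)
  have hγC : ∀ i, (γ i : ℂ) ≠ 0 := fun i => by simpa using hγ0 i
  have hd0 : ∀ i, d i ≠ 0 := fun i h => by
    have := hd i
    rw [h, zero_pow (ht i).ne'] at this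
    exact hγC i this.symm
  -- embeddings are determined by the images of the generators
  have hext : ∀ σ σ' : L →ₐ[K] ℂ, σ z = σ' z → (∀ i, σ (e i) = σ' (e i)) → σ = σ' := by
    intro σ σ' h1 h2
    let M : IntermediateField ℚ L :=
      { AlgHom.equalizer (σ.toRingHom.toRatAlgHom) (σ'.toRingHom.toRatAlgHom) with
        inv_mem' := fun x hx => by
          have hx' : σ x = σ' x := hx
          change σ x⁻¹ = σ' x⁻¹
          rw [map_inv₀, map_inv₀, hx'] }
    have hM : ∀ x : L, x ∈ M ↔ σ x = σ' x := fun x => Iff.rfl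
    have hle : L ≤ M.map L.val := by
      conv_lhs => rw [hLdef]
      refine sup_le ?_ ?_
      · intro x hx
        refine ⟨algebraMap K L ⟨x, hx⟩, ?_, rfl⟩
        change σ _ = σ' _
        rw [AlgHom.commutes, AlgHom.commutes]
      · rw [IntermediateField.adjoin_le_iff]
        rintro x (hx | hx)
        · rw [Set.mem_singleton_iff] at hx
          exact ⟨z, h1, hx.symm⟩
        · obtain ⟨i, hi⟩ := Set.mem_iUnion.1 hx
          have hi' : x ^ t i = γ i := hi
          have hq : (x / d i) ^ n = 1 := by
            obtain ⟨k, hk⟩ := htn i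
            rw [hk, pow_mul, div_pow, hi', hd, div_self (hγC i), one_pow]
          have : NeZero n := ⟨hn.ne'⟩
          obtain ⟨k, -, hk⟩ := hζ.eq_pow_of_pow_eq_one hq
          refine ⟨z ^ k * e i, ?_, ?_⟩
          · change σ _ = σ' _
            rw [map_mul, map_mul, map_pow, map_pow, h1, h2]
          · change primRoot n ^ k * d i = x
            rw [hk, div_mul_cancel₀ _ (hd0 i)]
    ext x
    obtain ⟨y, hy, hyx⟩ := hle x.2
    have : y = x := Subtype.ext hyx
    subst this
    exact hy
  have : FiniteDimensional K L := Module.Finite.of_restrictScalars_finite ℚ K L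
  -- degree bound
  have hdeg : Module.finrank K L ≤ n.totient * ∏ i, t i := by
    rw [← AlgHom.card K L ℂ, ← Finset.card_univ]
    calc _ ≤ (primitiveRoots n ℂ ×ˢ Fintype.piFinset
            (fun i => (Polynomial.nthRoots (t i) (γ i : ℂ)).toFinset)).card := by
          refine Finset.card_le_card_of_injOn (fun σ => (σ z, fun i => σ (e i))) ?_ ?_
          · intro σ _
            simp only [Finset.coe_product, Set.mem_prod, Finset.mem_coe, Fintype.mem_piFinset,
              Multiset.mem_toFinset]
            refine ⟨(mem_primitiveRoots hn).2 (hz.map_of_injective σ.toRingHom.injective), ?_⟩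
            intro i
            rw [Polynomial.mem_nthRoots (ht i), ← map_pow, he, AlgHom.commutes]
            rfl
          · intro σ _ σ' _ h
            simp only [Prod.mk.injEq] at h
            exact hext _ _ h.1 (fun i => congrFun h.2 i)
      _ ≤ _ := by
          rw [Finset.card_product, hζ.card_primitiveRoots, Fintype.card_piFinset]
          refine Nat.mul_le_mul_left _ (Finset.prod_le_prod' fun i _ => ?_)
          exact (Multiset.toFinset_card_le _).trans (Polynomial.card_nthRoots _ _)
  -- the different
  let a' : Fin r → NumberField.RingOfIntegers K := fun i => ⟨a i, ha i⟩
  let b' : Fin r → NumberField.RingOfIntegers K := fun i => ⟨b i, hb i⟩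
  have ha' : ∀ i, a' i ≠ 0 := fun i h => ha0 i (congrArg Subtype.val h)
  have hb' : ∀ i, b' i ≠ 0 := fun i h => hb0 i (congrArg Subtype.val h)
  have hdiff := kum_mem_different (K := K) (F := L) ℂ (ι := Option (Fin r))
    (fun o => o.elim z e) (fun o => o.elim n t) (by rintro (_ | i); exacts [hn, ht i])
    (fun o => o.elim 1 a') (fun o => o.elim 1 b')
    (by rintro (_ | i); exacts [one_ne_zero, ha' i])
    (by rintro (_ | i); exacts [one_ne_zero, hb' i])
    (by
      rintro (_ | i)
      · simp [hz.pow_eq_one]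
      · change e i ^ t i * algebraMap K L (b i) = algebraMap K L (a i)
        rw [he, ← map_mul, hγ, div_mul_cancel₀ _ (hb0 i)])
    (fun σ σ' h => hext _ _ (h none) fun i => h (some i)) τ
  have hfin := kum_discr_le _ (by
    rw [Finset.prod_ne_zero_iff]
    rintro (_ | i) -
    · simpa using hn.ne'
    · exact mul_ne_zero (by simpa using (ht i).ne') (mul_ne_zero (ha' i) (hb' i))) hdiff
  have hnt : ((n : ℝ) * ∏ i, (t i : ℝ)) ≠ 0 := mul_ne_zero (by exact_mod_cast hn.ne')
    (Finset.prod_ne_zero_iff.2 fun i _ => by exact_mod_cast (ht i).ne')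
  have hN0 : ∀ i, ((Algebra.norm ℚ (a i * b i) : ℚ) : ℝ) ≠ 0 := fun i => by
    rw [Rat.cast_ne_zero, Algebra.norm_ne_zero_iff]
    exact mul_ne_zero (ha0 i) (hb0 i)
  have hNorm : Real.log |((Algebra.norm ℚ ((∏ o : Option (Fin r),
      (((o.elim n t : ℕ) : NumberField.RingOfIntegers K) * (o.elim 1 a' * o.elim 1 b')) :
        NumberField.RingOfIntegers K) : K) : ℚ) : ℝ)| =
      (Module.finrank ℚ K : ℝ) * Real.log ((n : ℝ) * ∏ i, (t i : ℝ)) +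
        ∑ i, Real.log |((Algebra.norm ℚ (a i * b i) : ℚ) : ℝ)| := by
    have h1 : ((∏ o : Option (Fin r),
      (((o.elim n t : ℕ) : NumberField.RingOfIntegers K) * (o.elim 1 a' * o.elim 1 b')) :
        NumberField.RingOfIntegers K) : K) =
        algebraMap ℚ K ((n : ℚ) * ∏ i, (t i : ℚ)) * ∏ i, (a i * b i) := by
      rw [Fintype.prod_option, Finset.prod_mul_distrib]
      simp only [Option.elim_none, Option.elim_some, map_mul, map_prod, map_natCast, mul_one]
      rw [mul_assoc]
      rfl
    rw [h1, map_mul, Algebra.norm_algebraMap, map_prod]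
    push_cast
    rw [abs_mul, Real.log_mul, Finset.abs_prod, Real.log_prod, Real.log_abs, Real.log_pow]
    · intro i _
      simpa using hN0 i
    · exact abs_ne_zero.2 (pow_ne_zero _ hnt)
    · exact abs_ne_zero.2 (Finset.prod_ne_zero_iff.2 fun i _ => hN0 i)
  rw [hNorm] at hfin
  have hS : 0 ≤ ∑ i, Real.log |((Algebra.norm ℚ (a i * b i) : ℚ) : ℝ)| := by
    refine Finset.sum_nonneg fun i _ => Real.log_nonneg ?_
    have h1 : Algebra.norm ℤ (a' i * b' i) ≠ 0 :=
      Algebra.norm_ne_zero_iff.2 (mul_ne_zero (ha' i) (hb' i))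
    have h2 : ((Algebra.norm ℤ (a' i * b' i) : ℤ) : ℚ) = Algebra.norm ℚ (a i * b i) :=
      Algebra.coe_norm_int _
    rw [← h2, Rat.cast_intCast, ← Int.cast_abs]
    exact_mod_cast Int.one_le_abs h1
  have hD : 0 ≤ Real.log |(NumberField.discr K : ℝ)| := by
    refine Real.log_nonneg ?_
    rw [← Int.cast_abs]
    exact_mod_cast Int.one_le_abs (NumberField.discr_ne_zero K)
  have hnt1 : 0 ≤ Real.log ((n : ℝ) * ∏ i, (t i : ℝ)) := by
    have : 1 ≤ n * ∏ i, t i := Nat.mul_pos hn (Finset.prod_pos fun i _ => ht i)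
    exact Real.log_nonneg (by exact_mod_cast this)
  have hdeg' : (Module.finrank K L : ℝ) ≤ (n.totient : ℝ) * ∏ i, (t i : ℝ) := by
    exact_mod_cast hdeg
  refine hfin.trans (mul_le_mul hdeg' ?_
    (add_nonneg (add_nonneg (mul_nonneg (Nat.cast_nonneg _) hnt1) hS) hD)
    (mul_nonneg (Nat.cast_nonneg _) (Finset.prod_nonneg fun i _ => Nat.cast_nonneg _)))
  linarith
end
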